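/- Let μ be a probability measure on a measurable space Ω₁ with measurable sets E₁, F₁ ⊆ Ω₁, and let ν be a probability measure on a measurable space Ω₂ with measurable sets E₂, F₂ ⊆ Ω₂. If μ(E₁ ∣ F₁ᶜ) = ν(E₂ ∣ F₂ᶜ), then |μ(E₁) − ν(E₂)| ≤ 2·μ(F₁) + 2·ν(F₂). -/

import Mathlib

open MeasureTheory ProbabilityTheory

/-!
Conditioning on `s` moves the probability of any event by at most `μ sᶜ`: restricting an event to
`s` loses at most `μ sᶜ`, and the renormalization by `(μ s)⁻¹ ≥ 1` only increases the result. The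
opposite inequality is this one applied to the complementary event. Comparing each game with its
conditioned version then gives the bound by the triangle inequality, even without the factors `2`.
-/

section Cond

variable {Ω : Type*} [MeasurableSpace Ω] (μ : Measure Ω) [IsProbabilityMeasure μ] (s t : Set Ω)

lemma measure_le_cond_add_measure_compl : μ t ≤ μ[t | s] + μ sᶜ := by
  have restrict_le_cond : μ.restrict s t ≤ μ[t | s] :=
    le_mul_of_one_le_left' (ENNReal.one_le_inv.mpr prob_le_one)
  calc μ t ≤ μ (t ∩ s) + μ (t \ s) := measure_le_inter_add_sdiff μ t s
    _ ≤ μ[t | s] + μ sᶜ :=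
      add_le_add ((Measure.le_restrict_apply s t).trans restrict_le_cond)
        (measure_mono fun _ hx ↦ hx.2)

lemma cond_le_measure_add_measure_compl : μ[t | s] ≤ μ t + μ sᶜ := by
  wlog ht : MeasurableSet t generalizing t
  · calc μ[t | s] ≤ μ[toMeasurable μ t | s] := measure_mono (subset_toMeasurable μ t)
      _ ≤ μ (toMeasurable μ t) + μ sᶜ := this _ (measurableSet_toMeasurable μ t)
      _ = μ t + μ sᶜ := by rw [measure_toMeasurable]
  rcases eq_or_ne (μ s) 0 with hs | hs
  · simp [cond_eq_zero_of_meas_eq_zero hs]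
  have := cond_isProbabilityMeasure hs
  have one_le : 1 ≤ μ t + μ sᶜ + μ[tᶜ | s] := calc
    1 = μ t + μ tᶜ := (prob_add_prob_compl ht).symm
    _ ≤ μ t + (μ[tᶜ | s] + μ sᶜ) := by gcongr; exact measure_le_cond_add_measure_compl μ s tᶜ
    _ = μ t + μ sᶜ + μ[tᶜ | s] := by ring
  calc μ[t | s] = 1 - μ[tᶜ | s] := by rw [← prob_compl_eq_one_sub ht.compl, compl_compl]
    _ ≤ μ t + μ sᶜ := tsub_le_iff_right.mpr one_le

lemma abs_measure_sub_cond_le_measure_compl :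
    |(μ t).toReal - (μ[t | s]).toReal| ≤ (μ sᶜ).toReal := by
  rw [abs_sub_le_iff, sub_le_iff_le_add', sub_le_iff_le_add']
  exact ⟨ENNReal.toReal_le_add (measure_le_cond_add_measure_compl μ s t) (by finiteness)
      (by finiteness),
    ENNReal.toReal_le_add (cond_le_measure_add_measure_compl μ s t) (by finiteness)
      (by finiteness)⟩

end Cond

theorem almost_identical_oracles_distinguish_general
    {Ω₁ Ω₂ : Type*} [MeasurableSpace Ω₁] [MeasurableSpace Ω₂]
    (μ : Measure Ω₁) (ν : Measure Ω₂) [IsProbabilityMeasure μ] [IsProbabilityMeasure ν]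
    (E₁ F₁ : Set Ω₁) (E₂ F₂ : Set Ω₂) :
    |(μ E₁).toReal - (ν E₂).toReal| ≤
      |(μ[E₁ | F₁ᶜ]).toReal - (ν[E₂ | F₂ᶜ]).toReal| + (μ F₁).toReal + (ν F₂).toReal := by
  have hμ : |(μ E₁).toReal - (μ[E₁ | F₁ᶜ]).toReal| ≤ (μ F₁).toReal := by
    simpa only [compl_compl] using abs_measure_sub_cond_le_measure_compl μ F₁ᶜ E₁
  have hν : |(ν[E₂ | F₂ᶜ]).toReal - (ν E₂).toReal| ≤ (ν F₂).toReal := by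
    simpa only [compl_compl, abs_sub_comm] using abs_measure_sub_cond_le_measure_compl ν F₂ᶜ E₂
  linarith [abs_sub_le (μ E₁).toReal (μ[E₁ | F₁ᶜ]).toReal (ν E₂).toReal,
    abs_sub_le (μ[E₁ | F₁ᶜ]).toReal (ν[E₂ | F₂ᶜ]).toReal (ν E₂).toReal]

/-- Distinguishing almost identical punctured oracles: if the output distributions of two
games conditioned on the respective "Find" events not occurring coincide, then the
distinguishing advantage is at most `2·μ F₁ + 2·ν F₂`. -/
theorem almost_identical_oracles_distinguish
    {Ω₁ Ω₂ : Type*} [MeasurableSpace Ω₁] [MeasurableSpace Ω₂]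
    (μ : Measure Ω₁) (ν : Measure Ω₂) [IsProbabilityMeasure μ] [IsProbabilityMeasure ν]
    (E₁ F₁ : Set Ω₁) (E₂ F₂ : Set Ω₂)
    (hE₁ : MeasurableSet E₁) (hF₁ : MeasurableSet F₁)
    (hE₂ : MeasurableSet E₂) (hF₂ : MeasurableSet F₂)
    (h : μ[E₁ | F₁ᶜ] = ν[E₂ | F₂ᶜ]) :
    |(μ E₁).toReal - (ν E₂).toReal| ≤ 2 * (μ F₁).toReal + 2 * (ν F₂).toReal := by
  have bound := almost_identical_oracles_distinguish_general μ ν E₁ F₁ E₂ F₂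
  rw [h, sub_self, abs_zero, zero_add] at bound
  linarith [(μ F₁).toReal_nonneg, (ν F₂).toReal_nonneg]
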